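/- Let σ ≤ 32π², α > 0, and m ≥ 1. There exists a constant C > 0 independent of α such that T^{rad}_{α,m} := sup{ ∫_B |x|^α ( e^{σu²} − Σ_{k=0}^m σ^k u^{2k}/k! ) dx : u ∈ H²_{N,rad}(B), ‖Δu‖₂ = 1 } ≤ C/α^{9/2} for all sufficiently large α. Combined with T_{α,m} ≥ C'/α⁴, this shows T^{rad}_{α,m} < T_{α,m} for all α large enough (symmetry breaking). -/

import Mathlib

/-!
For a radial profile `u` vanishing on the sphere, `Δ` is inverted by the averaged Green kernel
`((max r t)⁻² - 1) / 2`, whose squared weighted `L²` norm in `t` is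
`(-log r - (1 - r²) / 2) / 4`. By Cauchy–Schwarz `u r ^ 2` is therefore at most a multiple of both
`-log r` and `(log r)²`: the first bounds `exp (σ u²)` by a power `r ^ (-κ)`, and the second shows
that `u` vanishes linearly at the boundary. The remainder of the exponential series is at most
`s ^ (m + 1) * exp s`, so the radial functional is at most a multiple of
`∫ r ^ (α + 3 - κ) (-log r) ^ (2 m + 2) dr`, which is of order `α ^ (-(2 m + 3))`.

Dilating a fixed bump by `α` about a point at distance `1 / (2 α)` from the sphere preserves
`‖Δv‖₂` in dimension four and keeps the weight bounded below, so the full functional loses only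
the volume factor `α ^ (-4)`. For `m ≥ 1` this beats `α ^ (-(2 m + 3))`.
-/

open MeasureTheory

noncomputable def ω₃ : ℝ := 2 * Real.pi ^ 2

noncomputable abbrev E4 := EuclideanSpace ℝ (Fin 4)

/-- The Laplacian on `ℝ⁴`, as the trace of the second derivative. -/
noncomputable def lap4 (u : E4 → ℝ) (x : E4) : ℝ :=
  ∑ i : Fin 4, iteratedFDeriv ℝ 2 u x ![EuclideanSpace.single i 1, EuclideanSpace.single i 1]

/-- The truncated weighted exponential functional on the unit ball `B ⊂ ℝ⁴`. -/
noncomputable def Fm (α σ : ℝ) (m : ℕ) (u : E4 → ℝ) : ℝ :=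
  ∫ x in Metric.ball (0:E4) 1, ‖x‖ ^ α *
    (Real.exp (σ * (u x) ^ 2) -
      ∑ k ∈ Finset.range (m + 1), σ ^ k * (u x) ^ (2 * k) / (Nat.factorial k))

/-- The radial Laplacian in dimension 4. -/
noncomputable def radLap (u : ℝ → ℝ) (r : ℝ) : ℝ :=
  deriv (deriv u) r + 3 / r * deriv u r

/-- The truncated functional for a radial profile on the unit ball `B ⊂ ℝ⁴`,
in polar coordinates. -/
noncomputable def FmRad (α σ : ℝ) (m : ℕ) (u : ℝ → ℝ) : ℝ :=
  ω₃ * ∫ r in Set.Ioo (0:ℝ) 1, r ^ (α + 3) *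
    (Real.exp (σ * (u r) ^ 2) -
      ∑ k ∈ Finset.range (m + 1), σ ^ k * (u r) ^ (2 * k) / (Nat.factorial k))

open Set Filter Topology InnerProductSpace
open scoped Laplacian

/-- The remainder of the exponential series after `n` terms. The integrands of `Fm` and `FmRad`
are its values at `σ u²` with `n = m + 1`. -/
noncomputable def expRemainder (n : ℕ) (s : ℝ) : ℝ :=
  Real.exp s - ∑ k ∈ Finset.range n, s ^ k / k.factorial

theorem expRemainder_nonneg (n : ℕ) {s : ℝ} (hs : 0 ≤ s) : 0 ≤ expRemainder n s :=
  sub_nonneg.mpr (Real.sum_le_exp_of_nonneg hs n)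

theorem expRemainder_pos (n : ℕ) {s : ℝ} (hs : 0 < s) : 0 < expRemainder n s := by
  have hnext : 0 ≤ expRemainder (n + 1) s := expRemainder_nonneg _ hs.le
  have hterm : 0 < s ^ n / n.factorial := by positivity
  rw [expRemainder, Finset.sum_range_succ] at hnext
  rw [expRemainder]
  linarith

theorem expRemainder_le_pow_mul_exp (n : ℕ) {s : ℝ} (hs : 0 ≤ s) :
    expRemainder n s ≤ s ^ n * Real.exp s := by
  have h := Complex.norm_exp_sub_sum_le_norm_mul_exp s n
  rw [Complex.norm_of_nonneg hs] at h
  refine (le_abs_self _).trans (le_of_eq_of_le ?_ h)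
  rw [← Real.norm_eq_abs, ← Complex.norm_real, expRemainder]
  push_cast
  rfl

theorem expRemainder_succ_zero (n : ℕ) : expRemainder (n + 1) 0 = 0 := by
  simp [expRemainder, Finset.sum_range_succ']

theorem continuous_expRemainder (n : ℕ) : Continuous (expRemainder n) := by
  unfold expRemainder
  fun_prop

theorem Fm_eq_integral_expRemainder (α σ : ℝ) (m : ℕ) (u : E4 → ℝ) :
    Fm α σ m u =
      ∫ x in Metric.ball (0 : E4) 1, ‖x‖ ^ α * expRemainder (m + 1) (σ * u x ^ 2) := by
  simp only [Fm, expRemainder, mul_pow, pow_mul]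

theorem FmRad_eq_integral_expRemainder (α σ : ℝ) (m : ℕ) (u : ℝ → ℝ) :
    FmRad α σ m u =
      ω₃ * ∫ r in Ioo (0 : ℝ) 1, r ^ (α + 3) * expRemainder (m + 1) (σ * u r ^ 2) := by
  simp only [FmRad, expRemainder, mul_pow, pow_mul]

theorem ω₃_pos : 0 < ω₃ := by
  unfold ω₃
  positivity

section WeightedCauchySchwarz

variable {X : Type*} [MeasurableSpace X] {μ : Measure X} {f g w : X → ℝ}

theorem integrable_mul_mul_of_sq_mul (hw : 0 ≤ᵐ[μ] w)
    (hfg : AEStronglyMeasurable (fun x => f x * g x * w x) μ)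
    (hf : Integrable (fun x => f x ^ 2 * w x) μ) (hg : Integrable (fun x => g x ^ 2 * w x) μ) :
    Integrable (fun x => f x * g x * w x) μ := by
  refine (hf.add hg).mono' hfg ?_
  filter_upwards [hw] with x hx
  rw [Real.norm_eq_abs, abs_mul, abs_of_nonneg hx, Pi.add_apply, ← add_mul]
  refine mul_le_mul_of_nonneg_right (abs_le.mpr ⟨?_, ?_⟩) hx <;>
    nlinarith [sq_nonneg (f x - g x), sq_nonneg (f x + g x), sq_nonneg (f x), sq_nonneg (g x)]

theorem sq_integral_mul_mul_le (hw : 0 ≤ᵐ[μ] w) (hfg : Integrable (fun x => f x * g x * w x) μ)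
    (hf : Integrable (fun x => f x ^ 2 * w x) μ) (hg : Integrable (fun x => g x ^ 2 * w x) μ) :
    (∫ x, f x * g x * w x ∂μ) ^ 2 ≤ (∫ x, f x ^ 2 * w x ∂μ) * ∫ x, g x ^ 2 * w x ∂μ := by
  have hquad : ∀ c : ℝ, 0 ≤ (∫ x, g x ^ 2 * w x ∂μ) * (c * c) +
      2 * (∫ x, f x * g x * w x ∂μ) * c + ∫ x, f x ^ 2 * w x ∂μ := fun c => by
    calc 0 ≤ ∫ x, (f x + c * g x) ^ 2 * w x ∂μ :=
          integral_nonneg_of_ae (hw.mono fun x hx => mul_nonneg (sq_nonneg _) hx)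
      _ = ∫ x, (c * c) * (g x ^ 2 * w x) + 2 * c * (f x * g x * w x) + f x ^ 2 * w x ∂μ := by
          congr 1 with x
          ring
      _ = _ := by
          have hg' := hg.const_mul (c * c)
          have hfg' := hfg.const_mul (2 * c)
          have hsum : Integrable
              (fun x => c * c * (g x ^ 2 * w x) + 2 * c * (f x * g x * w x)) μ := hg'.add hfg'
          rw [integral_add hsum hf, integral_add hg' hfg', integral_const_mul,
            integral_const_mul]
          ring
  have hdiscrim := discrim_le_zero hquad
  rw [discrim] at hdiscrim
  linarith

end WeightedCauchySchwarz

theorem exists_continuousOn_Icc_eqOn_Ioo_of_integrableOn_deriv {E : Type*} [NormedAddCommGroup E]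
    [NormedSpace ℝ E] [CompleteSpace E] {F F' : ℝ → E} {a b : ℝ} (hab : a < b)
    (hF : ∀ t ∈ Ioo a b, HasDerivAt F (F' t) t) (hF' : IntegrableOn F' (Ioo a b)) :
    ∃ G : ℝ → E, ContinuousOn G (Icc a b) ∧ EqOn F G (Ioo a b) := by
  obtain ⟨c, hc⟩ := nonempty_Ioo.mpr hab
  have hint : IntervalIntegrable F' volume a b :=
    (intervalIntegrable_iff_integrableOn_Ioo_of_le hab.le).mpr hF'
  have hcab : c ∈ uIcc a b := Ioo_subset_Icc_self.trans Icc_subset_uIcc hc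
  refine ⟨fun t => F c + ∫ s in c..t, F' s, continuousOn_const.add ?_, fun t ht => ?_⟩
  · rw [← uIcc_of_le hab.le]
    exact intervalIntegral.continuousOn_primitive_interval' hint hcab
  · have hsub : uIcc c t ⊆ Ioo a b := ordConnected_Ioo.uIcc_subset hc ht
    simp [intervalIntegral.integral_eq_sub_of_hasDerivAt (fun s hs => hF s (hsub hs))
      (hint.mono_set (hsub.trans (Ioo_subset_Icc_self.trans Icc_subset_uIcc)))]

theorem exists_mul_deriv_eq_sub_of_double {u : ℝ → ℝ} {R s : ℝ}
    (hu : DifferentiableOn ℝ u (Ioo 0 R)) (hs : s ∈ Ioo 0 (R / 2)) :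
    ∃ ξ ∈ Ioo s (2 * s), s * deriv u ξ = u (2 * s) - u s := by
  have hsub : Icc s (2 * s) ⊆ Ioo 0 R := fun t ht =>
    ⟨hs.1.trans_le ht.1, ht.2.trans_lt (by linarith [hs.2])⟩
  obtain ⟨ξ, hξ, hslope⟩ := exists_deriv_eq_slope u (by linarith [hs.1] : s < 2 * s)
    (hu.continuousOn.mono hsub) (hu.mono (Ioo_subset_Icc_self.trans hsub))
  have hs0 := hs.1.ne'
  refine ⟨ξ, hξ, ?_⟩
  rw [hslope]
  field_simp
  ring

theorem norm_pow_succ_mul_le_of_mul_eq_sub {s ξ d x y : ℝ} (hs : 0 < s) (hξ : ξ ∈ Ioo s (2 * s))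
    (hd : s * d = y - x) (n : ℕ) :
    ‖ξ ^ (n + 1) * d‖ ≤ 2 * |(2 * s) ^ n * y| + 2 ^ (n + 1) * |s ^ n * x| := by
  have hξ0 := hs.trans hξ.1
  calc ‖ξ ^ (n + 1) * d‖ = ξ ^ (n + 1) * |d| := by
        rw [Real.norm_eq_abs, abs_mul, abs_of_pos (by positivity)]
    _ ≤ (2 * s) ^ (n + 1) * |d| := by gcongr; exact hξ.2.le
    _ = 2 ^ (n + 1) * s ^ n * |y - x| := by
        rw [← hd, abs_mul, abs_of_pos hs]
        ring
    _ ≤ 2 ^ (n + 1) * s ^ n * (|y| + |x|) := by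
        gcongr
        exact abs_sub _ _
    _ = _ := by
        simp only [abs_mul, abs_pow, abs_of_pos hs, abs_two]
        ring

-- The mean value theorem on `[s, 2 s]` produces points `ξ s → 0` at which `u'` is controlled by
-- the values of `u`.
theorem eq_zero_of_tendsto_pow_succ_mul_deriv {u : ℝ → ℝ} {R l : ℝ} {n : ℕ} (hR : 0 < R)
    (hu : DifferentiableOn ℝ u (Ioo 0 R))
    (hu0 : Tendsto (fun r => r ^ n * u r) (𝓝[>] 0) (𝓝 0))
    (hl : Tendsto (fun r => r ^ (n + 1) * deriv u r) (𝓝[>] 0) (𝓝 l)) : l = 0 := by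
  choose! ξ hξ hslope using fun s hs => exists_mul_deriv_eq_sub_of_double (s := s) hu hs
  have hnear : ∀ᶠ s : ℝ in 𝓝[>] 0, s ∈ Ioo 0 (R / 2) := Ioo_mem_nhdsGT (half_pos hR)
  have hdouble : Tendsto (fun s : ℝ => 2 * s) (𝓝[>] 0) (𝓝[>] 0) := by
    refine tendsto_nhdsWithin_iff.mpr ⟨tendsto_nhdsWithin_of_tendsto_nhds ?_, ?_⟩
    · exact (continuous_const_mul (2 : ℝ)).tendsto' 0 0 (mul_zero 2)
    · filter_upwards [self_mem_nhdsWithin] with s hs using mul_pos two_pos (mem_Ioi.mp hs)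
  have hξ0 : Tendsto ξ (𝓝[>] 0) (𝓝[>] 0) := by
    refine tendsto_nhdsWithin_iff.mpr ⟨?_, ?_⟩
    · refine squeeze_zero' ?_ ?_ (hdouble.mono_right nhdsWithin_le_nhds)
      · filter_upwards [hnear] with s hs using hs.1.le.trans (hξ s hs).1.le
      · filter_upwards [hnear] with s hs using (hξ s hs).2.le
    · filter_upwards [hnear] with s hs using hs.1.trans (hξ s hs).1
  have hbound : ∀ᶠ s in 𝓝[>] 0, ‖ξ s ^ (n + 1) * deriv u (ξ s)‖ ≤
      2 * |(2 * s) ^ n * u (2 * s)| + 2 ^ (n + 1) * |s ^ n * u s| := by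
    filter_upwards [hnear] with s hs using
      norm_pow_succ_mul_le_of_mul_eq_sub hs.1 (hξ s hs) (hslope s hs) n
  refine tendsto_nhds_unique (hl.comp hξ0) (squeeze_zero_norm' hbound ?_)
  simpa using ((hu0.comp hdouble).abs.const_mul 2).add (hu0.abs.const_mul (2 ^ (n + 1)))

/-- Radial profiles of the Navier space `H²_N(B)` that are `C²` away from the origin. The condition
at the origin excludes the singularity `r⁻²` of the fundamental solution of `Δ`; it holds for the
unbounded elements of `H²`. -/
structure IsRadialNavierProfile (u : ℝ → ℝ) : Prop where
  contDiffOn : ContDiffOn ℝ 2 u (Ioo 0 1)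
  continuousOn : ContinuousOn u (Ioc 0 1)
  tendsto_sq_mul : Tendsto (fun r => r ^ 2 * u r) (𝓝[>] 0) (𝓝 0)
  apply_one : u 1 = 0
  integrableOn : IntegrableOn (fun r => radLap u r ^ 2 * r ^ 3) (Ioo 0 1)

/-- Up to the factor `-ω₃`, the spherical mean of the Green function of `Δ` on `B`: the
weighted kernel `-radGreen r t * t ^ 3` inverts `radLap` under the boundary condition
`u 1 = 0`. -/
noncomputable def radGreen (r t : ℝ) : ℝ := ((max r t ^ 2)⁻¹ - 1) / 2

theorem continuous_radGreen {r : ℝ} (hr : 0 < r) : Continuous (radGreen r) := by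
  unfold radGreen
  have : ∀ t, max r t ^ 2 ≠ 0 := fun t => (pow_pos (lt_max_of_lt_left hr) 2).ne'
  fun_prop (disch := assumption)

theorem hasDerivAt_radGreen_of_lt {r t : ℝ} (h : t < r) : HasDerivAt (radGreen r) 0 t := by
  refine (hasDerivAt_const t (((r ^ 2)⁻¹ - 1) / 2)).congr_of_eventuallyEq ?_
  filter_upwards [Iio_mem_nhds h] with s hs
  rw [radGreen, max_eq_left_of_lt hs]

theorem hasDerivAt_radGreen_of_gt {r t : ℝ} (ht : t ≠ 0) (h : r < t) :
    HasDerivAt (radGreen r) (-(t ^ 3)⁻¹) t := by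
  have hinv : HasDerivAt (fun s : ℝ => ((s ^ 2)⁻¹ - 1) / 2) (-(t ^ 3)⁻¹) t := by
    refine ((((hasDerivAt_pow 2 t).inv (pow_ne_zero 2 ht)).sub_const 1).div_const 2).congr_deriv ?_
    field_simp
    push_cast
    ring
  refine hinv.congr_of_eventuallyEq ?_
  filter_upwards [Ioi_mem_nhds h] with s hs
  rw [radGreen, max_eq_right_of_lt hs]

theorem integral_sq_radGreen_mul_cube {r : ℝ} (hr : r ∈ Ioo (0 : ℝ) 1) :
    ∫ t in (0 : ℝ)..1, radGreen r t ^ 2 * t ^ 3 = (-Real.log r - (1 - r ^ 2) / 2) / 4 := by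
  have hr0 := hr.1.ne'
  have hint : ∀ a b, IntervalIntegrable (fun t => radGreen r t ^ 2 * t ^ 3) volume a b :=
    (((continuous_radGreen hr.1).pow 2).mul (continuous_pow 3)).intervalIntegrable
  have hinner : ∫ t in (0 : ℝ)..r, radGreen r t ^ 2 * t ^ 3 =
      (((r ^ 2)⁻¹ - 1) / 2) ^ 2 * (r ^ 4 / 4) := by
    calc _ = ∫ t in (0 : ℝ)..r, (((r ^ 2)⁻¹ - 1) / 2) ^ 2 * t ^ 3 := by
          refine intervalIntegral.integral_congr fun t ht => ?_
          rw [uIcc_of_le hr.1.le] at ht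
          simp only [radGreen, max_eq_left ht.2]
      _ = _ := by
          rw [intervalIntegral.integral_const_mul, integral_pow]
          norm_num
  have hderiv : ∀ t ∈ uIcc r 1, HasDerivAt (fun t => (Real.log t - t ^ 2 + t ^ 4 / 4) / 4)
      (radGreen r t ^ 2 * t ^ 3) t := fun t ht => by
    rw [uIcc_of_le hr.2.le] at ht
    have ht0 : t ≠ 0 := (hr.1.trans_le ht.1).ne'
    refine ((((Real.hasDerivAt_log ht0).sub (hasDerivAt_pow 2 t)).add
      ((hasDerivAt_pow 4 t).div_const 4)).div_const 4).congr_deriv ?_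
    rw [radGreen, max_eq_right ht.1]
    field_simp
    ring
  rw [← intervalIntegral.integral_add_adjacent_intervals (hint 0 r) (hint r 1), hinner,
    intervalIntegral.integral_eq_sub_of_hasDerivAt hderiv (hint r 1), Real.log_one]
  field_simp
  ring

theorem exp_neg_le_quadratic_of_nonneg {s : ℝ} (hs : 0 ≤ s) :
    Real.exp (-s) ≤ 1 - s + s ^ 2 / 2 := by
  have hpos : 0 < 1 - s + s ^ 2 / 2 := by nlinarith [sq_nonneg (s - 1)]
  rw [Real.exp_neg]
  refine inv_le_of_inv_le₀ hpos (le_trans ?_ (Real.quadratic_le_exp_of_nonneg hs))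
  rw [inv_le_iff_one_le_mul₀ hpos]
  nlinarith [pow_nonneg hs 4]

theorem neg_log_sub_le_sq_log {r : ℝ} (hr : r ∈ Ioo (0 : ℝ) 1) :
    -Real.log r - (1 - r ^ 2) / 2 ≤ Real.log r ^ 2 := by
  have h := exp_neg_le_quadratic_of_nonneg
    (mul_nonneg zero_le_two (neg_nonneg.mpr (Real.log_neg hr.1 hr.2).le))
  rw [mul_neg, neg_neg, two_mul, Real.exp_add, Real.exp_log hr.1] at h
  linarith

section RadialLaplacian

variable {u : ℝ → ℝ}

theorem hasDerivAt_of_contDiffOn_two (hu : ContDiffOn ℝ 2 u (Ioo 0 1)) {r : ℝ}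
    (hr : r ∈ Ioo (0 : ℝ) 1) : HasDerivAt u (deriv u r) r :=
  ((hu.contDiffAt (isOpen_Ioo.mem_nhds hr)).differentiableAt two_ne_zero).hasDerivAt

theorem integral_radLap_sq_nonneg (u : ℝ → ℝ) :
    0 ≤ ∫ r in Ioo (0 : ℝ) 1, radLap u r ^ 2 * r ^ 3 :=
  setIntegral_nonneg measurableSet_Ioo fun _ hr => mul_nonneg (sq_nonneg _) (pow_nonneg hr.1.le 3)

theorem continuousOn_radLap (hu : ContDiffOn ℝ 2 u (Ioo 0 1)) :
    ContinuousOn (radLap u) (Ioo 0 1) := by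
  have hu' : ContDiffOn ℝ 1 (deriv u) (Ioo 0 1) := hu.deriv_of_isOpen isOpen_Ioo (by norm_num)
  exact (hu'.continuousOn_deriv_of_isOpen isOpen_Ioo le_rfl).add
    ((continuousOn_const.div continuousOn_id fun r hr => hr.1.ne').mul hu'.continuousOn)

theorem hasDerivAt_cube_mul_deriv (hu : ContDiffOn ℝ 2 u (Ioo 0 1)) {r : ℝ}
    (hr : r ∈ Ioo (0 : ℝ) 1) :
    HasDerivAt (fun r => r ^ 3 * deriv u r) (radLap u r * r ^ 3) r := by
  have hu' : ContDiffOn ℝ 1 (deriv u) (Ioo 0 1) := hu.deriv_of_isOpen isOpen_Ioo (by norm_num)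
  have hd := ((hu'.contDiffAt (isOpen_Ioo.mem_nhds hr)).differentiableAt one_ne_zero).hasDerivAt
  refine ((hasDerivAt_pow 3 r).mul hd).congr_deriv ?_
  have hr0 := hr.1.ne'
  rw [radLap]
  field_simp
  ring

theorem hasDerivAt_cube_mul_deriv_mul_radGreen_add (hu : ContDiffOn ℝ 2 u (Ioo 0 1)) {r t : ℝ}
    (ht : t ∈ Ioo (0 : ℝ) 1) (htr : t ≠ r) :
    HasDerivAt (fun t => t ^ 3 * deriv u t * radGreen r t + u (max r t))
      (radLap u t * radGreen r t * t ^ 3) t := by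
  have hcube := hasDerivAt_cube_mul_deriv hu ht
  rcases lt_or_gt_of_ne htr with h | h
  · have hmax : HasDerivAt (fun t => u (max r t)) 0 t := by
      refine (hasDerivAt_const t (u r)).congr_of_eventuallyEq ?_
      filter_upwards [Iio_mem_nhds h] with s hs
      rw [max_eq_left_of_lt hs]
    refine ((hcube.mul (hasDerivAt_radGreen_of_lt h)).add hmax).congr_deriv ?_
    ring
  · have hmax : HasDerivAt (fun t => u (max r t)) (deriv u t) t := by
      refine (hasDerivAt_of_contDiffOn_two hu ht).congr_of_eventuallyEq ?_
      filter_upwards [Ioi_mem_nhds h] with s hs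
      rw [max_eq_right_of_lt hs]
    have ht0 := ht.1.ne'
    refine ((hcube.mul (hasDerivAt_radGreen_of_gt ht0 h)).add hmax).congr_deriv ?_
    field_simp
    ring

end RadialLaplacian

namespace IsRadialNavierProfile

variable {u : ℝ → ℝ}

theorem of_continuousOn (hu : ContDiffOn ℝ 2 u (Ioo 0 1)) (hcont : ContinuousOn u (Icc 0 1))
    (hu1 : u 1 = 0) (hint : IntegrableOn (fun r => radLap u r ^ 2 * r ^ 3) (Ioo 0 1)) :
    IsRadialNavierProfile u where
  contDiffOn := hu
  continuousOn := hcont.mono Ioc_subset_Icc_self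
  tendsto_sq_mul := by
    have h : Tendsto (fun r => r ^ 2 * u r) (𝓝[Icc 0 1] 0) (𝓝 (0 ^ 2 * u 0)) :=
      ((continuousOn_pow 2).mul hcont) 0 (left_mem_Icc.mpr zero_le_one)
    rw [zero_pow two_ne_zero, zero_mul, nhdsWithin_Icc_eq_nhdsGE zero_lt_one] at h
    exact h.mono_left (nhdsWithin_mono _ Ioi_subset_Ici_self)
  apply_one := hu1
  integrableOn := hint

theorem integrableOn_radLap_mul (hu : IsRadialNavierProfile u) {g : ℝ → ℝ} (hg : Continuous g) :
    IntegrableOn (fun r => radLap u r * g r * r ^ 3) (Ioo 0 1) := by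
  refine integrable_mul_mul_of_sq_mul ?_ ?_ hu.integrableOn ?_
  · filter_upwards [ae_restrict_mem measurableSet_Ioo] with r hr using pow_nonneg hr.1.le 3
  · exact (((continuousOn_radLap hu.contDiffOn).mul hg.continuousOn).mul
      (continuousOn_pow 3)).aestronglyMeasurable measurableSet_Ioo
  · exact ((hg.pow 2).mul (continuous_pow 3)).continuousOn.integrableOn_Icc.mono_set
      Ioo_subset_Icc_self

theorem exists_continuousOn_eqOn_cube_mul_deriv (hu : IsRadialNavierProfile u) :
    ∃ Φ : ℝ → ℝ, ContinuousOn Φ (Icc 0 1) ∧ EqOn (fun r => r ^ 3 * deriv u r) Φ (Ioo 0 1) ∧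
      Φ 0 = 0 := by
  obtain ⟨Φ, hΦ, heq⟩ := exists_continuousOn_Icc_eqOn_Ioo_of_integrableOn_deriv zero_lt_one
    (fun r hr => hasDerivAt_cube_mul_deriv hu.contDiffOn hr)
    (by simpa using hu.integrableOn_radLap_mul (continuous_const (y := (1 : ℝ))))
  refine ⟨Φ, hΦ, heq, eq_zero_of_tendsto_pow_succ_mul_deriv (n := 2) zero_lt_one
    (hu.contDiffOn.differentiableOn two_ne_zero) hu.tendsto_sq_mul ?_⟩
  have hΦ0 : Tendsto Φ (𝓝[>] 0) (𝓝 (Φ 0)) := by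
    rw [← nhdsWithin_Ioo_eq_nhdsGT (zero_lt_one' ℝ)]
    exact (hΦ 0 (left_mem_Icc.mpr zero_le_one)).mono Ioo_subset_Icc_self
  refine hΦ0.congr' ?_
  filter_upwards [Ioo_mem_nhdsGT (zero_lt_one' ℝ)] with r hr using (heq hr).symm

theorem eq_neg_integral_radGreen (hu : IsRadialNavierProfile u) {r : ℝ} (hr : r ∈ Ioo (0 : ℝ) 1) :
    u r = -∫ t in (0 : ℝ)..1, radLap u t * radGreen r t * t ^ 3 := by
  obtain ⟨Φ, hΦ, heq, hΦ0⟩ := hu.exists_continuousOn_eqOn_cube_mul_deriv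
  have hmax : MapsTo (max r) (Icc 0 1) (Ioc 0 1) := fun t ht =>
    ⟨hr.1.trans_le (le_max_left _ _), max_le hr.2.le ht.2⟩
  have hcont : ContinuousOn (fun t => Φ t * radGreen r t + u (max r t)) (Icc 0 1) :=
    (hΦ.mul (continuous_radGreen hr.1).continuousOn).add
      (hu.continuousOn.comp (by fun_prop) hmax)
  have hderiv : ∀ t ∈ Ioo (0 : ℝ) 1 \ {r}, HasDerivAt (fun t => Φ t * radGreen r t + u (max r t))
      (radLap u t * radGreen r t * t ^ 3) t := by
    rintro t ⟨ht, htr⟩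
    refine (hasDerivAt_cube_mul_deriv_mul_radGreen_add hu.contDiffOn ht htr)
      |>.congr_of_eventuallyEq ?_
    filter_upwards [isOpen_Ioo.mem_nhds ht] with s hs
    rw [← heq hs]
  have hint := (intervalIntegrable_iff_integrableOn_Ioo_of_le zero_le_one).mpr
    (hu.integrableOn_radLap_mul (continuous_radGreen hr.1))
  rw [integral_eq_of_hasDerivAt_off_countable_of_le _ _ zero_le_one (countable_singleton r) hcont
    hderiv hint]
  simp [radGreen, max_eq_right hr.2.le, max_eq_left hr.1.le, hu.apply_one, hΦ0]

theorem sq_le (hu : IsRadialNavierProfile u) {r : ℝ} (hr : r ∈ Ioo (0 : ℝ) 1) :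
    u r ^ 2 ≤ (∫ t in Ioo (0 : ℝ) 1, radLap u t ^ 2 * t ^ 3) *
      ((-Real.log r - (1 - r ^ 2) / 2) / 4) := by
  have hG := continuous_radGreen hr.1
  rw [hu.eq_neg_integral_radGreen hr, neg_sq, ← integral_sq_radGreen_mul_cube hr,
    intervalIntegral.integral_of_le zero_le_one, intervalIntegral.integral_of_le zero_le_one,
    integral_Ioc_eq_integral_Ioo, integral_Ioc_eq_integral_Ioo]
  refine sq_integral_mul_mul_le ?_ (hu.integrableOn_radLap_mul hG) hu.integrableOn ?_
  · filter_upwards [ae_restrict_mem measurableSet_Ioo] with t ht using pow_nonneg ht.1.le 3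
  · exact ((hG.pow 2).mul (continuous_pow 3)).continuousOn.integrableOn_Icc.mono_set
      Ioo_subset_Icc_self

theorem sq_le_neg_log (hu : IsRadialNavierProfile u) {r : ℝ} (hr : r ∈ Ioo (0 : ℝ) 1) :
    u r ^ 2 ≤ (∫ t in Ioo (0 : ℝ) 1, radLap u t ^ 2 * t ^ 3) / 4 * (-Real.log r) := by
  refine (hu.sq_le hr).trans ?_
  rw [mul_div_assoc', div_mul_eq_mul_div]
  have := pow_le_one₀ (n := 2) hr.1.le hr.2.le
  gcongr
  · exact integral_radLap_sq_nonneg u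
  · linarith

theorem sq_le_sq_log (hu : IsRadialNavierProfile u) {r : ℝ} (hr : r ∈ Ioo (0 : ℝ) 1) :
    u r ^ 2 ≤ (∫ t in Ioo (0 : ℝ) 1, radLap u t ^ 2 * t ^ 3) / 4 * Real.log r ^ 2 := by
  refine (hu.sq_le hr).trans ?_
  rw [mul_div_assoc', div_mul_eq_mul_div]
  have := neg_log_sub_le_sq_log hr
  gcongr
  · exact integral_radLap_sq_nonneg u

end IsRadialNavierProfile

theorem image_exp_neg_Ioi_zero : (fun t : ℝ => Real.exp (-t)) '' Ioi 0 = Ioo 0 1 := by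
  ext r
  refine ⟨?_, fun hr => ⟨-Real.log r, neg_pos.mpr (Real.log_neg hr.1 hr.2), ?_⟩⟩
  · rintro ⟨t, ht, rfl⟩
    exact ⟨Real.exp_pos _, Real.exp_lt_one_iff.mpr (neg_lt_zero.mpr ht)⟩
  · simp only [neg_neg, Real.exp_log hr.1]

-- The substitution `r = exp (-t)` turns this into a Gamma integral.
theorem integral_rpow_mul_neg_log_pow {b : ℝ} (hb : 0 < b) (n : ℕ) :
    ∫ r in Ioo (0 : ℝ) 1, r ^ (b - 1) * (-Real.log r) ^ n = n.factorial / b ^ (n + 1) := by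
  have hderiv : ∀ t ∈ Ioi (0 : ℝ),
      HasDerivWithinAt (fun t : ℝ => Real.exp (-t)) (-Real.exp (-t)) (Ioi 0) t := fun t _ => by
    simpa using (hasDerivAt_neg t).exp.hasDerivWithinAt
  have hinj : InjOn (fun t : ℝ => Real.exp (-t)) (Ioi 0) :=
    (Real.exp_injective.comp neg_injective).injOn
  calc ∫ r in Ioo (0 : ℝ) 1, r ^ (b - 1) * (-Real.log r) ^ n
      = ∫ t in Ioi (0 : ℝ), t ^ ((n + 1 : ℝ) - 1) * Real.exp (-(b * t)) := by
        rw [← image_exp_neg_Ioi_zero,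
          integral_image_eq_integral_abs_deriv_smul measurableSet_Ioi hderiv hinj]
        refine setIntegral_congr_fun measurableSet_Ioi fun t _ => ?_
        simp only [abs_neg, Real.abs_exp, Real.log_exp, neg_neg, smul_eq_mul, ← Real.exp_mul,
          add_sub_cancel_right, Real.rpow_natCast]
        rw [← mul_assoc, ← Real.exp_add, mul_comm]
        ring_nf
    _ = n.factorial / b ^ (n + 1) := by
        rw [Real.integral_rpow_mul_exp_neg_mul_Ioi (by positivity) hb, Real.Gamma_nat_eq_factorial,
          ← Nat.cast_succ, Real.rpow_natCast, one_div, inv_pow, inv_mul_eq_div]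

theorem integrableOn_rpow_mul_neg_log_pow {b : ℝ} (hb : 0 < b) (n : ℕ) :
    IntegrableOn (fun r => r ^ (b - 1) * (-Real.log r) ^ n) (Ioo 0 1) := by
  refine Integrable.of_integral_ne_zero ?_
  rw [integral_rpow_mul_neg_log_pow hb]
  positivity

namespace IsRadialNavierProfile

variable {u : ℝ → ℝ}

-- `sq_le_sq_log` bounds the `n`-th power, `sq_le_neg_log` the exponential.
theorem expRemainder_mul_sq_le (hu : IsRadialNavierProfile u) {σ κ : ℝ} (hσ : 0 ≤ σ)
    (hκ : σ * ((∫ t in Ioo (0 : ℝ) 1, radLap u t ^ 2 * t ^ 3) / 4) = κ) (n : ℕ) {r : ℝ}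
    (hr : r ∈ Ioo (0 : ℝ) 1) :
    expRemainder n (σ * u r ^ 2) ≤ κ ^ n * (-Real.log r) ^ (2 * n) * r ^ (-κ) := by
  have hpow : σ * u r ^ 2 ≤ κ * (-Real.log r) ^ 2 := by
    rw [neg_sq, ← hκ, mul_assoc]
    exact mul_le_mul_of_nonneg_left (hu.sq_le_sq_log hr) hσ
  have hexp : σ * u r ^ 2 ≤ Real.log r * -κ := by
    rw [mul_comm (Real.log r), neg_mul_comm, ← hκ, mul_assoc]
    exact mul_le_mul_of_nonneg_left (hu.sq_le_neg_log hr) hσ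
  have hs : 0 ≤ σ * u r ^ 2 := by positivity
  calc expRemainder n (σ * u r ^ 2) ≤ (σ * u r ^ 2) ^ n * Real.exp (σ * u r ^ 2) :=
        expRemainder_le_pow_mul_exp n hs
    _ ≤ (κ * (-Real.log r) ^ 2) ^ n * Real.exp (Real.log r * -κ) := by
        gcongr
        exact pow_nonneg (hs.trans hpow) n
    _ = _ := by rw [mul_pow, ← pow_mul, Real.rpow_def_of_pos hr.1]

theorem FmRad_le (hu : IsRadialNavierProfile u) {α σ κ : ℝ} (m : ℕ) (hσ : 0 ≤ σ)
    (hκ : σ * ((∫ t in Ioo (0 : ℝ) 1, radLap u t ^ 2 * t ^ 3) / 4) = κ) (hα : κ < α + 4) :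
    FmRad α σ m u ≤
      ω₃ * (κ ^ (m + 1) * ((2 * (m + 1)).factorial / (α + 4 - κ) ^ (2 * (m + 1) + 1))) := by
  have hb : 0 < α + 4 - κ := sub_pos.mpr hα
  rw [FmRad_eq_integral_expRemainder, ← integral_rpow_mul_neg_log_pow hb,
    ← integral_const_mul (κ ^ (m + 1))]
  refine mul_le_mul_of_nonneg_left (integral_mono_of_nonneg ?_
    ((integrableOn_rpow_mul_neg_log_pow hb _).const_mul _) ?_) ω₃_pos.le
  all_goals filter_upwards [ae_restrict_mem measurableSet_Ioo] with r hr
  · exact mul_nonneg (Real.rpow_nonneg hr.1.le _) (expRemainder_nonneg _ (by positivity))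
  · calc r ^ (α + 3) * expRemainder (m + 1) (σ * u r ^ 2)
        ≤ r ^ (α + 3) * (κ ^ (m + 1) * (-Real.log r) ^ (2 * (m + 1)) * r ^ (-κ)) :=
          mul_le_mul_of_nonneg_left (hu.expRemainder_mul_sq_le hσ hκ _ hr)
            (Real.rpow_nonneg hr.1.le _)
      _ = _ := by
          rw [show α + 4 - κ - 1 = α + 3 + -κ by ring, Real.rpow_add hr.1 (α + 3)]
          ring

end IsRadialNavierProfile

section Laplacian

variable {E : Type*} [NormedAddCommGroup E] [InnerProductSpace ℝ E] [FiniteDimensional ℝ E]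

theorem lap4_eq_laplacian (u : E4 → ℝ) : lap4 u = Δ u := by
  ext x
  simp only [laplacian_eq_iteratedFDeriv_orthonormalBasis u (EuclideanSpace.basisFun (Fin 4) ℝ),
    lap4, EuclideanSpace.basisFun_apply]

theorem laplacian_comp_smul_sub {f : E → ℝ} (hf : ContDiff ℝ 2 f) (c : ℝ) (a x : E) :
    Δ (fun y => f (c • (y - a))) x = c ^ 2 * Δ f (c • (x - a)) := by
  simp only [laplacian_eq_iteratedFDeriv_stdOrthonormalBasis]
  rw [iteratedFDeriv_comp_sub (f := fun z => f (c • z)),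
    iteratedFDeriv_comp_const_smul c (by exact_mod_cast hf)]
  simp only [smul_apply, smul_eq_mul, Finset.mul_sum]

theorem continuous_laplacian {f : E → ℝ} (hf : ContDiff ℝ 2 f) : Continuous (Δ f) := by
  have : Continuous (iteratedFDeriv ℝ 2 f) := hf.continuous_iteratedFDeriv le_rfl
  rw [laplacian_eq_iteratedFDeriv_stdOrthonormalBasis]
  fun_prop

theorem support_laplacian_subset (f : E → ℝ) : Function.support (Δ f) ⊆ tsupport f := by
  refine fun x => Function.mtr fun hx => ?_
  rw [Function.notMem_support,
    (laplacian_congr_nhds (notMem_tsupport_iff_eventuallyEq.mp hx)).eq_of_nhds]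
  exact congrFun (laplacian_const (c := (0 : ℝ))) x

theorem laplacian_norm_sq (x : E) : Δ (fun y : E => ‖y‖ ^ 2) x = 2 * Module.finrank ℝ E := by
  rw [laplacian_eq_iteratedFDeriv_stdOrthonormalBasis]
  have hsecond : ∀ v, fderiv ℝ (fderiv ℝ fun y : E => ‖y‖ ^ 2) x v v = 2 * ‖v‖ ^ 2 := fun v => by
    have hconst : fderiv ℝ (fderiv ℝ fun y : E => ‖y‖ ^ 2) x = 2 • innerSL ℝ := by
      rw [fderiv_norm_sq]
      exact (2 • innerSL ℝ (E := E)).fderiv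
    rw [hconst, two_smul, two_mul, ← real_inner_self_eq_norm_sq]
    rfl
  simp [iteratedFDeriv_two_apply, hsecond, mul_comm]

theorem exists_laplacian_ne_zero [Nontrivial E] {ρ : ℝ} (hρ : 0 < ρ) :
    ∃ f : E → ℝ, ContDiff ℝ (⊤ : ℕ∞) f ∧ tsupport f ⊆ Metric.closedBall 0 ρ ∧ Δ f 0 ≠ 0 := by
  let b : ContDiffBump (0 : E) := ⟨ρ / 2, ρ, half_pos hρ, half_lt_self hρ⟩
  refine ⟨fun x => b x * ‖x‖ ^ 2, b.contDiff.mul (contDiff_norm_sq ℝ), ?_, ?_⟩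
  · exact (tsupport_mul_subset_left (f := b)).trans b.tsupport_eq.subset
  · have hnear : (fun x => b x * ‖x‖ ^ 2) =ᶠ[𝓝 0] fun x => ‖x‖ ^ 2 := by
      filter_upwards [Metric.closedBall_mem_nhds (0 : E) b.rIn_pos] with x hx
      rw [b.one_of_mem_closedBall hx, one_mul]
    rw [(laplacian_congr_nhds hnear).eq_of_nhds, laplacian_norm_sq]
    have := Module.finrank_pos (R := ℝ) (M := E)
    positivity

variable [MeasurableSpace E] [BorelSpace E] (μ : Measure E) [μ.IsAddHaarMeasure]

theorem exists_integral_laplacian_sq_eq_one [Nontrivial E] {ρ : ℝ} (hρ : 0 < ρ) :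
    ∃ f : E → ℝ, ContDiff ℝ (⊤ : ℕ∞) f ∧ tsupport f ⊆ Metric.closedBall 0 ρ ∧
      ∫ x, Δ f x ^ 2 ∂μ = 1 := by
  obtain ⟨f, hf, hsupp, hf0⟩ := exists_laplacian_ne_zero (E := E) hρ
  have hf2 : ContDiff ℝ 2 f := hf.of_le (WithTop.coe_le_coe.mpr le_top)
  have hcs : HasCompactSupport (Δ f) := .of_support_subset_isCompact
    (isCompact_closedBall 0 ρ) ((support_laplacian_subset f).trans hsupp)
  have hI : 0 < ∫ x, Δ f x ^ 2 ∂μ :=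
    Continuous.integral_pos_of_hasCompactSupport_nonneg_nonzero (x := 0)
      ((continuous_laplacian hf2).pow 2) (hcs.comp_left (g := (· ^ 2)) (zero_pow two_ne_zero))
      (fun x => sq_nonneg _) (pow_ne_zero 2 hf0)
  set I := ∫ x, Δ f x ^ 2 ∂μ
  refine ⟨(Real.sqrt I)⁻¹ • f, hf.const_smul (Real.sqrt I)⁻¹,
    (tsupport_smul_subset_right (fun _ => (Real.sqrt I)⁻¹) f).trans hsupp, ?_⟩
  simp only [laplacian_smul _ hf2.contDiffAt, smul_eq_mul, mul_pow, integral_const_mul, inv_pow,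
    Real.sq_sqrt hI.le]
  exact inv_mul_cancel₀ hI.ne'

end Laplacian

section Concentration

variable {E : Type*} [NormedAddCommGroup E] [NormedSpace ℝ E] {e : E} {α : ℝ}

/-- The dilation of `f` by `α` about the point `(1 - 1 / (2 * α)) • e`. For a unit vector `e` it
moves functions supported in the ball of radius `1 / 4` into the unit ball, at distance of order
`1 / α` from the sphere, where the weight `‖x‖ ^ α` stays bounded below. -/
noncomputable def boundaryConcentration (e : E) (α : ℝ) (f : E → ℝ) (x : E) : ℝ :=
  f (α • (x - (1 - 1 / (2 * α)) • e))

theorem contDiff_boundaryConcentration {n : WithTop ℕ∞} {f : E → ℝ} (hf : ContDiff ℝ n f) (e : E)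
    (α : ℝ) : ContDiff ℝ n (boundaryConcentration e α f) :=
  hf.comp ((contDiff_id.sub contDiff_const).const_smul α)

theorem norm_mem_Ico_of_smul_sub_mem_closedBall (he : ‖e‖ = 1) (hα : 1 ≤ α) {x : E}
    (hx : α • (x - (1 - 1 / (2 * α)) • e) ∈ Metric.closedBall 0 (1 / 4)) :
    ‖x‖ ∈ Ico (1 - 3 / 4 / α) 1 := by
  have hα0 : 0 < α := zero_lt_one.trans_le hα
  set a := (1 - 1 / (2 * α)) • e with ha
  have hxa : ‖x - a‖ ≤ 1 / 4 / α := by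
    rwa [mem_closedBall_zero_iff, norm_smul, Real.norm_of_nonneg hα0.le, ← le_div_iff₀' hα0] at hx
  have hna : ‖a‖ = 1 - 2 * (1 / 4 / α) := by
    have : 1 / (2 * α) ≤ 1 := (div_le_one (by positivity)).mpr (by linarith)
    rw [ha, norm_smul, he, mul_one, Real.norm_of_nonneg (by linarith)]
    ring
  have hlower := norm_sub_norm_le a x
  have hupper := norm_sub_norm_le x a
  rw [norm_sub_rev] at hlower
  have hpos : 0 < 1 / 4 / α := by positivity
  have hthree : 3 / 4 / α = 3 * (1 / 4 / α) := by ring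
  constructor <;> linarith

theorem norm_mem_Ico_of_mem_tsupport_boundaryConcentration (he : ‖e‖ = 1) (hα : 1 ≤ α)
    {f : E → ℝ} (hf : tsupport f ⊆ Metric.closedBall 0 (1 / 4)) {x : E}
    (hx : x ∈ tsupport (boundaryConcentration e α f)) : ‖x‖ ∈ Ico (1 - 3 / 4 / α) 1 := by
  have hcont : Continuous fun x : E => α • (x - (1 - 1 / (2 * α)) • e) := by fun_prop
  exact norm_mem_Ico_of_smul_sub_mem_closedBall he hα
    (hf (tsupport_comp_subset_preimage f hcont hx))

theorem tsupport_boundaryConcentration_subset (he : ‖e‖ = 1) (hα : 1 ≤ α)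
    {f : E → ℝ} (hf : tsupport f ⊆ Metric.closedBall 0 (1 / 4)) :
    tsupport (boundaryConcentration e α f) ⊆ Metric.ball 0 1 := fun _ hx =>
  mem_ball_zero_iff.mpr (norm_mem_Ico_of_mem_tsupport_boundaryConcentration he hα hf hx).2

theorem one_sub_le_rpow {s t : ℝ} (hα : 1 ≤ α) (hs : s ≤ 1) (hst : 1 - s / α ≤ t) :
    1 - s ≤ t ^ α := by
  have hα0 : 0 < α := zero_lt_one.trans_le hα
  have hsα : s / α ≤ 1 := (div_le_one hα0).mpr (hs.trans hα)
  calc 1 - s = 1 + α * -(s / α) := by field_simp; ring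
    _ ≤ (1 + -(s / α)) ^ α := one_add_mul_self_le_rpow_one_add (neg_le_neg hsα) hα
    _ ≤ t ^ α := Real.rpow_le_rpow (by linarith) (by linarith) hα0.le

variable [FiniteDimensional ℝ E] [MeasurableSpace E] [BorelSpace E] (μ : Measure E)
  [μ.IsAddHaarMeasure]

theorem integral_boundaryConcentration (f : E → ℝ) (hα : 0 ≤ α) (e : E) :
    ∫ x, boundaryConcentration e α f x ∂μ = (α ^ Module.finrank ℝ E)⁻¹ * ∫ x, f x ∂μ := by
  simp only [boundaryConcentration]
  rw [integral_sub_right_eq_self (fun x => f (α • x)), Measure.integral_comp_smul,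
    abs_of_nonneg (by positivity), smul_eq_mul]

theorem setIntegral_norm_rpow_mul_boundaryConcentration_ge (he : ‖e‖ = 1) (hα : 1 ≤ α)
    {f : E → ℝ} (hf : Continuous f) (hf0 : 0 ≤ f)
    (hsupp : tsupport f ⊆ Metric.closedBall 0 (1 / 4)) :
    1 / 4 * ((α ^ Module.finrank ℝ E)⁻¹ * ∫ x, f x ∂μ) ≤
      ∫ x in Metric.ball 0 1, ‖x‖ ^ α * boundaryConcentration e α f x ∂μ := by
  have hα0 : 0 ≤ α := zero_le_one.trans hα
  set g := boundaryConcentration e α f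
  have hg : Continuous g :=
    contDiff_zero.mp (contDiff_boundaryConcentration (contDiff_zero.mpr hf) e α)
  have hball : tsupport g ⊆ Metric.ball 0 1 := tsupport_boundaryConcentration_subset he hα hsupp
  have hcs : HasCompactSupport g := .of_support_subset_isCompact (isCompact_closedBall 0 1)
    ((subset_tsupport g).trans (hball.trans Metric.ball_subset_closedBall))
  have hint : Integrable g μ := hg.integrable_of_hasCompactSupport hcs
  have hint' : Integrable (fun x => ‖x‖ ^ α * g x) μ :=
    ((continuous_norm.rpow_const fun _ => Or.inr hα0).mul hg).integrable_of_hasCompactSupport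
      hcs.mul_left
  have hzero : ∀ x ∉ Metric.ball 0 1, g x = 0 := fun x hx =>
    image_eq_zero_of_notMem_tsupport fun h => hx (hball h)
  rw [← integral_boundaryConcentration μ f hα0 e,
    ← setIntegral_eq_integral_of_forall_compl_eq_zero hzero, ← integral_const_mul]
  refine integral_mono (hint.integrableOn.const_mul _) hint'.integrableOn fun x => ?_
  by_cases hx : x ∈ tsupport g
  · have hx' := norm_mem_Ico_of_mem_tsupport_boundaryConcentration he hα hsupp hx
    have hweight : 1 - 3 / 4 ≤ ‖x‖ ^ α := one_sub_le_rpow hα (by norm_num) hx'.1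
    exact mul_le_mul_of_nonneg_right (by linarith) (hf0 _)
  · simp only [image_eq_zero_of_notMem_tsupport hx, mul_zero, le_refl]

end Concentration

section LaplacianConcentration

variable {E : Type*} [NormedAddCommGroup E] [InnerProductSpace ℝ E] [FiniteDimensional ℝ E]
  {f : E → ℝ} {e : E} {α : ℝ}

theorem laplacian_boundaryConcentration (hf : ContDiff ℝ 2 f) (e : E) (α : ℝ) (x : E) :
    Δ (boundaryConcentration e α f) x = α ^ 2 * boundaryConcentration e α (Δ f) x :=
  laplacian_comp_smul_sub hf α _ x

theorem setIntegral_laplacian_boundaryConcentration_sq [MeasurableSpace E] [BorelSpace E]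
    (μ : Measure E) [μ.IsAddHaarMeasure] (hf : ContDiff ℝ 2 f) (he : ‖e‖ = 1) (hα : 1 ≤ α)
    (hsupp : tsupport f ⊆ Metric.closedBall 0 (1 / 4)) :
    ∫ x in Metric.ball 0 1, Δ (boundaryConcentration e α f) x ^ 2 ∂μ =
      α ^ 4 * ((α ^ Module.finrank ℝ E)⁻¹ * ∫ x, Δ f x ^ 2 ∂μ) := by
  have hball := tsupport_boundaryConcentration_subset he hα hsupp
  have hzero : ∀ x ∉ Metric.ball 0 1, Δ (boundaryConcentration e α f) x ^ 2 = 0 := fun x hx => by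
    rw [Function.notMem_support.mp fun h => hx (hball (support_laplacian_subset _ h)),
      zero_pow two_ne_zero]
  have hscale : ∀ x, Δ (boundaryConcentration e α f) x ^ 2 =
      α ^ 4 * boundaryConcentration e α (fun y => Δ f y ^ 2) x := fun x => by
    rw [laplacian_boundaryConcentration hf, mul_pow, ← pow_mul]
    rfl
  rw [setIntegral_eq_integral_of_forall_compl_eq_zero hzero]
  simp only [hscale]
  rw [integral_const_mul, integral_boundaryConcentration μ _ (zero_le_one.trans hα)]

end LaplacianConcentration

theorem integral_expRemainder_mul_sq_pos {X : Type*} [TopologicalSpace X] [MeasurableSpace X]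
    [BorelSpace X] {μ : Measure X} [IsFiniteMeasureOnCompacts μ] [μ.IsOpenPosMeasure] {σ : ℝ}
    (hσ : 0 < σ) (n : ℕ) {f : X → ℝ} (hf : Continuous f) (hsupp : HasCompactSupport f)
    (hf0 : f ≠ 0) : 0 < ∫ x, expRemainder (n + 1) (σ * f x ^ 2) ∂μ := by
  obtain ⟨x, hx⟩ := Function.ne_iff.mp hf0
  refine Continuous.integral_pos_of_hasCompactSupport_nonneg_nonzero (x := x)
    ((continuous_expRemainder _).comp (by fun_prop))
    (hsupp.comp_left (g := fun y => expRemainder (n + 1) (σ * y ^ 2)) ?_)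
    (fun x => expRemainder_nonneg _ (by positivity)) (expRemainder_pos _ ?_).ne'
  · simp only [zero_pow two_ne_zero, mul_zero, expRemainder_succ_zero]
  · have : f x ≠ 0 := hx
    positivity

theorem exists_le_Fm {σ : ℝ} (hσ : 0 < σ) (m : ℕ) : ∃ c > 0, ∀ α : ℝ, 1 ≤ α →
    ∃ v : E4 → ℝ, ContDiff ℝ (⊤ : ℕ∞) v ∧ tsupport v ⊆ Metric.ball 0 1 ∧
      ∫ x in Metric.ball 0 1, lap4 v x ^ 2 = 1 ∧ c / α ^ 4 ≤ Fm α σ m v := by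
  obtain ⟨φ, hφ, hsupp, hnorm⟩ :=
    exists_integral_laplacian_sq_eq_one (E := E4) volume (ρ := 1 / 4) (by norm_num)
  obtain ⟨e, he⟩ := exists_norm_eq E4 zero_le_one
  have hφ0 : φ ≠ 0 := by
    rintro rfl
    have hΔ : Δ (0 : E4 → ℝ) = 0 := laplacian_const
    simp [hΔ] at hnorm
  have hcs : HasCompactSupport φ := .of_support_subset_isCompact (isCompact_closedBall 0 (1 / 4))
    ((subset_tsupport φ).trans hsupp)
  set g : E4 → ℝ := fun x => expRemainder (m + 1) (σ * φ x ^ 2)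
  have hgsupp : tsupport g ⊆ Metric.closedBall 0 (1 / 4) := by
    refine (tsupport_comp_subset (g := fun y => expRemainder (m + 1) (σ * y ^ 2)) ?_ φ).trans hsupp
    simp only [zero_pow two_ne_zero, mul_zero, expRemainder_succ_zero]
  have hg : Continuous g := (continuous_expRemainder _).comp (by fun_prop)
  refine ⟨1 / 4 * ∫ x, g x, mul_pos (by norm_num)
    (integral_expRemainder_mul_sq_pos hσ m hφ.continuous hcs hφ0), fun α hα =>
    ⟨boundaryConcentration e α φ, contDiff_boundaryConcentration hφ e α,
      tsupport_boundaryConcentration_subset he hα hsupp, ?_, ?_⟩⟩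
  · rw [lap4_eq_laplacian, setIntegral_laplacian_boundaryConcentration_sq volume
      (hφ.of_le (WithTop.coe_le_coe.mpr le_top)) he hα hsupp, hnorm, finrank_euclideanSpace_fin,
      mul_one, mul_inv_cancel₀ (by positivity)]
  · rw [Fm_eq_integral_expRemainder]
    refine le_of_eq_of_le ?_ (setIntegral_norm_rpow_mul_boundaryConcentration_ge volume he hα hg
      (fun x => expRemainder_nonneg _ (by positivity)) hgsupp)
    rw [finrank_euclideanSpace_fin, mul_div_assoc, inv_mul_eq_div]

theorem eventually_div_rpow_lt_div_rpow (K : ℝ) {C p q : ℝ} (hC : 0 < C) (hpq : p < q) :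
    ∀ᶠ α : ℝ in atTop, K / α ^ q < C / α ^ p := by
  have hlim : Tendsto (fun α : ℝ => K * α ^ (-(q - p))) atTop (𝓝 0) := by
    simpa using (tendsto_rpow_neg_atTop (sub_pos.mpr hpq)).const_mul K
  filter_upwards [hlim.eventually_lt_const hC, eventually_gt_atTop 0] with α hlt hα
  calc K / α ^ q = K * α ^ (-(q - p)) / α ^ p := by
        rw [neg_sub, Real.rpow_sub hα]
        field_simp
    _ < C / α ^ p := by gcongr

theorem eventually_forall_FmRad_le {σ : ℝ} (hσ : 0 ≤ σ) (m : ℕ) {β : ℝ} (hβ : β < 2 * m + 3)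
    {C : ℝ} (hC : 0 < C) : ∀ᶠ α in atTop, ∀ u : ℝ → ℝ, IsRadialNavierProfile u →
      ω₃ * ∫ r in Ioo (0 : ℝ) 1, radLap u r ^ 2 * r ^ 3 = 1 → FmRad α σ m u ≤ C / α ^ β := by
  set κ := σ / (4 * ω₃) with hκ
  have hω := ω₃_pos
  have hκ0 : 0 ≤ κ := by positivity
  set M := ω₃ * (κ ^ (m + 1) * (2 * (m + 1)).factorial)
  filter_upwards [eventually_div_rpow_lt_div_rpow (M * 2 ^ (2 * m + 3)) hC hβ,
    eventually_gt_atTop (2 * κ)] with α hlt hα u hu hnorm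
  have hα0 : 0 < α := (mul_nonneg zero_le_two hκ0).trans_lt hα
  have hu2 : σ * ((∫ r in Ioo (0 : ℝ) 1, radLap u r ^ 2 * r ^ 3) / 4) = κ := by
    rw [eq_div_of_mul_eq hω.ne' ((mul_comm _ _).trans hnorm), hκ]
    ring
  calc FmRad α σ m u
      ≤ ω₃ * (κ ^ (m + 1) * ((2 * (m + 1)).factorial / (α + 4 - κ) ^ (2 * (m + 1) + 1))) :=
        hu.FmRad_le m hσ hu2 (by linarith)
    _ = M / (α + 4 - κ) ^ (2 * m + 3) := by ring
    _ ≤ M / (α / 2) ^ (2 * m + 3) := by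
        gcongr
        linarith
    _ = M * 2 ^ (2 * m + 3) / α ^ (2 * m + 3 : ℝ) := by
        rw [div_pow, div_div_eq_mul_div, ← Real.rpow_natCast α]
        push_cast
        rfl
    _ ≤ C / α ^ β := hlt.le

theorem eventually_exists_lt_Fm {σ : ℝ} (hσ : 0 < σ) (m : ℕ) {β : ℝ} (hβ : 4 < β) (C : ℝ) :
    ∀ᶠ α in atTop, ∃ v : E4 → ℝ, ContDiff ℝ (⊤ : ℕ∞) v ∧ tsupport v ⊆ Metric.ball 0 1 ∧
      ∫ x in Metric.ball 0 1, lap4 v x ^ 2 = 1 ∧ C / α ^ β < Fm α σ m v := by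
  obtain ⟨c, hc, hlower⟩ := exists_le_Fm hσ m
  filter_upwards [eventually_div_rpow_lt_div_rpow C hc hβ, eventually_ge_atTop 1] with α hlt hα
  obtain ⟨v, hv, hsupp, hnorm, hle⟩ := hlower α hα
  refine ⟨v, hv, hsupp, hnorm, hlt.trans_le ?_⟩
  exact_mod_cast hle

theorem radial_upper_bound_and_symmetry_breaking_general {σ : ℝ} (hσ : 0 < σ) (m : ℕ) {β : ℝ}
    (hβ4 : 4 < β) (hβ : β < 2 * m + 3) {C : ℝ} (hC : 0 < C) : ∀ᶠ α in atTop,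
      (∀ u : ℝ → ℝ, IsRadialNavierProfile u →
        ω₃ * ∫ r in Ioo (0 : ℝ) 1, radLap u r ^ 2 * r ^ 3 = 1 → FmRad α σ m u ≤ C / α ^ β) ∧
      ∃ v : E4 → ℝ, ContDiff ℝ (⊤ : ℕ∞) v ∧ tsupport v ⊆ Metric.ball 0 1 ∧
        ∫ x in Metric.ball 0 1, lap4 v x ^ 2 = 1 ∧ C / α ^ β < Fm α σ m v :=
  (eventually_forall_FmRad_le hσ.le m hβ hC).and (eventually_exists_lt_Fm hσ m hβ4 C)

/-- Symmetry breaking: for `σ ≤ 32π²` and `m ≥ 1`, there is `C > 0` (independent of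
`α`) such that for all sufficiently large `α`, every radial `u ∈ H²_{N,rad}(B)` with
`‖Δu‖₂ = 1` satisfies `F_m(u) ≤ C/α^{9/2}`, i.e. `T^{rad}_{α,m} ≤ C/α^{9/2}`, and
moreover there exists a (necessarily nonradial) `v ∈ H²_N(B)` with `‖Δv‖₂ = 1` and
`F_m(v) > C/α^{9/2}`, so that `T^{rad}_{α,m} < T_{α,m}`. -/
theorem radial_upper_bound_and_symmetry_breaking (σ : ℝ)
    (hσ0 : 0 < σ) (hσ : σ ≤ 32 * Real.pi ^ 2) (m : ℕ) (hm : 1 ≤ m) :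
    ∃ C > (0:ℝ), ∃ A : ℝ, ∀ α ≥ A,
      ((∀ u : ℝ → ℝ,
          ContDiffOn ℝ 2 u (Set.Ioo 0 1) → ContinuousOn u (Set.Icc 0 1) → u 1 = 0 →
          IntegrableOn (fun r => (radLap u r) ^ 2 * r ^ 3) (Set.Ioo 0 1) →
          (ω₃ * ∫ r in Set.Ioo (0:ℝ) 1, (radLap u r) ^ 2 * r ^ 3) = 1 →
          FmRad α σ m u ≤ C / α ^ ((9:ℝ)/2)) ∧
        ∃ v : E4 → ℝ, ContDiff ℝ (⊤ : ℕ∞) v ∧ tsupport v ⊆ Metric.ball (0:E4) 1 ∧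
          (∫ x in Metric.ball (0:E4) 1, (lap4 v x) ^ 2) = 1 ∧
          C / α ^ ((9:ℝ)/2) < Fm α σ m v) := by
  have hβ : (9 / 2 : ℝ) < 2 * m + 3 := by
    have : (1 : ℝ) ≤ m := mod_cast hm
    linarith
  obtain ⟨A, hA⟩ := eventually_atTop.mp <|
    radial_upper_bound_and_symmetry_breaking_general hσ0 m (by norm_num) hβ one_pos
  exact ⟨1, one_pos, A, fun α hα => ⟨fun u hu hcont hu1 hint hnorm =>
    (hA α hα).1 u (.of_continuousOn hu hcont hu1 hint) hnorm, (hA α hα).2⟩⟩
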